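/- There is an absolute constant c > 0 with the following property. Fix A ∈ ℝ^{m×n} with ‖A‖_max ≤ 1 and ε, α ∈ (0,1). Run the matrix game stochastic process with parameters δ ≤ ε/20, η = ε/60, and T ≥ c · ε^{−2} log(mn/α); additionally, at each step t, conditionally on the history and independently of (i_t, j_t), sample i'_t ∈ [m] from a distribution ũ'_t with ‖ũ'_t − u_t‖₁ ≤ δ and j'_t ∈ [n] from a distribution ṽ'_t with ‖ṽ'_t − v_t‖₁ ≤ δ. Let û := (1/T)Σ_{t=0}^{T−1} e_{i'_t} and v̂ := (1/T)Σ_{t=0}^{T−1} e_{j'_t}. Then with probability at least 1 − α, (û, v̂) is an ε-approximate Nash equilibrium for A. -/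

import Mathlib

/-!
With `g_t(i) = A i j_t`, the Gibbs iterate `u_t` is the multiplicative-weights iterate against the
gains `g_t`, so `mwu_regret` gives
`max_i ∑ A i j_t ≤ log m / η + ∑ u_tᵀ A e_{j_t} + η T`, and symmetrically for the other player.
Adding the two regret bounds, the duality gap of the subsampled pair is controlled by `m + n + 1`
sums of increments, each bounded by `2` and of conditional mean at most `2 δ ≤ ε / 10`:
`A i j'_t - A i j_t` for each row `i`, `A i_t j - A i'_t j` for each column `j`, and
`u_tᵀ A e_{j_t} - e_{i_t}ᵀ A v_t` (`gap_of_increments`).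

Each of the sums exceeds `T ε / 5` with probability at most `exp (-T ε² / 1600)` by the
exponential-moment method (`exp_moment`), which rests on the chain rule `path_sum_bounds` for path
weights of an adapted process. A union bound over at most `3 m n` events finishes the proof when
`m n ≥ 2`. When `m = n = 1` the union bound loses too much as `α → 1`, but then all increments
vanish.
-/


noncomputable section

/-- membership in the probability simplex Δ^k -/
def IsSimplex {k : ℕ} (u : Fin k → ℝ) : Prop :=
  (∀ i, 0 ≤ u i) ∧ ∑ i, u i = 1

/-- the Gibbs distribution associated with a vector `v` -/
def gibbs {k : ℕ} (v : Fin k → ℝ) : Fin k → ℝ :=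
  fun j => Real.exp (v j) / ∑ j', Real.exp (v j')

/-- `max_{u ∈ Δ^m} uᵀ A v` -/
def maxPayoff {m n : ℕ} (A : Matrix (Fin m) (Fin n) ℝ) (v : Fin n → ℝ) : ℝ :=
  sSup {r | ∃ u : Fin m → ℝ, IsSimplex u ∧ r = ∑ i, ∑ j, u i * A i j * v j}

/-- `min_{v ∈ Δ^n} uᵀ A v` -/
def minPayoff {m n : ℕ} (A : Matrix (Fin m) (Fin n) ℝ) (u : Fin m → ℝ) : ℝ :=
  sInf {r | ∃ v : Fin n → ℝ, IsSimplex v ∧ r = ∑ i, ∑ j, u i * A i j * v j}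

/-- the iterate `x_t = η ∑_{s<t} e_{i_s}`, where `i_s = (ω s).1` -/
def xIter {m n T : ℕ} (η : ℝ) (ω : Fin T → Fin m × Fin n) (t : ℕ) : Fin m → ℝ :=
  fun i => η * ((Finset.univ.filter fun s : Fin T => (s : ℕ) < t ∧ (ω s).1 = i).card : ℝ)

/-- the iterate `y_t = η ∑_{s<t} e_{j_s}`, where `j_s = (ω s).2` -/
def yIter {m n T : ℕ} (η : ℝ) (ω : Fin T → Fin m × Fin n) (t : ℕ) : Fin n → ℝ :=
  fun j => η * ((Finset.univ.filter fun s : Fin T => (s : ℕ) < t ∧ (ω s).2 = j).card : ℝ)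

/-- `u_t`, the Gibbs distribution of `A y_t` -/
def uIter {m n T : ℕ} (A : Matrix (Fin m) (Fin n) ℝ) (η : ℝ)
    (ω : Fin T → Fin m × Fin n) (t : ℕ) : Fin m → ℝ :=
  gibbs fun i => ∑ j, A i j * yIter η ω t j

/-- `v_t`, the Gibbs distribution of `-Aᵀ x_t` -/
def vIter {m n T : ℕ} (A : Matrix (Fin m) (Fin n) ℝ) (η : ℝ)
    (ω : Fin T → Fin m × Fin n) (t : ℕ) : Fin n → ℝ :=
  gibbs fun j => -∑ i, A i j * xIter η ω t i

open Finset

/-! ### Path weights and exponential moments -/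

/-- Chain rule for path weights: if the transition weights `F t ω` depend only on the coordinates
of `ω` before `t` and have total mass in `[L, K]`, then the total mass of all paths of length `T`
lies in `[L ^ T, K ^ T]`. -/
lemma path_sum_bounds {X : Type*} [Fintype X] [Nonempty X] (L K : ℝ) (hL : 0 ≤ L) :
    ∀ (T : ℕ) (F : Fin T → (Fin T → X) → X → ℝ),
      (∀ t ω ω', (∀ s : Fin T, s < t → ω s = ω' s) → F t ω = F t ω') →
      (∀ t ω a, 0 ≤ F t ω a) →
      (∀ t ω, L ≤ ∑ a, F t ω a) → (∀ t ω, ∑ a, F t ω a ≤ K) →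
      L ^ T ≤ ∑ ω : Fin T → X, ∏ t, F t ω (ω t) ∧
        ∑ ω : Fin T → X, ∏ t, F t ω (ω t) ≤ K ^ T := by
  intro T
  induction T with
  | zero => intro F _ _ _ _; simp
  | succ T ih =>
    intro F hdep hpos hlo hhi
    obtain ⟨x0⟩ := ‹Nonempty X›
    have key : ∑ ω : Fin (T + 1) → X, ∏ t, F t ω (ω t) =
        ∑ a, F 0 (fun _ => x0) a *
          ∑ ω' : Fin T → X, ∏ t : Fin T, F t.succ (Fin.cons a ω') (ω' t) := by
      rw [← (Fin.consEquiv (fun _ : Fin (T + 1) => X)).sum_comp, Fintype.sum_prod_type]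
      refine sum_congr rfl fun a _ => ?_
      rw [mul_sum]
      refine sum_congr rfl fun ω' _ => ?_
      rw [Fin.prod_univ_succ]
      simp only [Fin.consEquiv_apply, Fin.cons_zero, Fin.cons_succ]
      change F 0 (Fin.cons a ω') a * ∏ t : Fin T, F t.succ (Fin.cons a ω') (ω' t) = _
      rw [hdep 0 (Fin.cons a ω') (fun _ => x0) (fun s hs => absurd hs (Fin.not_lt_zero s))]
    have hT := fun a : X => ih (fun t ω' => F t.succ (Fin.cons a ω'))
      (fun t ω ω' h => hdep _ _ _ (by
        intro s hs
        induction s using Fin.cases with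
        | zero => simp
        | succ s => simpa using h s (by simpa using hs)))
      (fun t ω b => hpos _ _ _) (fun t ω => hlo _ _) (fun t ω => hhi _ _)
    rw [key]
    have hK : 0 ≤ K := (hL.trans (hlo 0 fun _ => x0)).trans (hhi 0 _)
    constructor
    · calc L ^ (T + 1) = L * L ^ T := by ring
        _ ≤ (∑ a, F 0 (fun _ => x0) a) * L ^ T :=
          mul_le_mul_of_nonneg_right (hlo _ _) (pow_nonneg hL _)
        _ ≤ _ := by
          rw [sum_mul]
          exact sum_le_sum fun a _ => mul_le_mul_of_nonneg_left (hT a).1 (hpos _ _ _)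
    · calc _ ≤ (∑ a, F 0 (fun _ => x0) a) * K ^ T := by
            rw [sum_mul]
            exact sum_le_sum fun a _ => mul_le_mul_of_nonneg_left (hT a).2 (hpos _ _ _)
        _ ≤ K * K ^ T := mul_le_mul_of_nonneg_right (hhi _ _) (pow_nonneg hK _)
        _ = _ := by ring

lemma exp_le_quad {x : ℝ} (hx : |x| ≤ 1) : Real.exp x ≤ 1 + x + x ^ 2 := by
  have := (abs_le.1 (Real.abs_exp_sub_one_sub_id_le hx)).2
  linarith

lemma sum_exp_le {X : Type*} [Fintype X] (q D : X → ℝ) (hq : ∀ a, 0 ≤ q a)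
    (hq1 : ∑ a, q a = 1) (B : ℝ) (hD : ∀ a, |D a| ≤ B) (l : ℝ) (hl : 0 ≤ l) (hlB : l * B ≤ 1)
    (μ : ℝ) (hμ : ∑ a, q a * D a ≤ μ) :
    ∑ a, q a * Real.exp (l * D a) ≤ Real.exp (l * μ + (l * B) ^ 2) := by
  have h1 : ∀ a, Real.exp (l * D a) ≤ 1 + l * D a + (l * B) ^ 2 := by
    intro a
    have h2 : |l * D a| ≤ l * B := by
      rw [abs_mul, abs_of_nonneg hl]; exact mul_le_mul_of_nonneg_left (hD a) hl
    have h3 := exp_le_quad (h2.trans hlB)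
    have h4 : (l * D a) ^ 2 ≤ (l * B) ^ 2 := sq_le_sq' (abs_le.1 h2).1 (abs_le.1 h2).2
    linarith
  calc ∑ a, q a * Real.exp (l * D a) ≤ ∑ a, q a * (1 + l * D a + (l * B) ^ 2) :=
        sum_le_sum fun a _ => mul_le_mul_of_nonneg_left (h1 a) (hq a)
    _ = ∑ a, (q a * (1 + (l * B) ^ 2) + l * (q a * D a)) :=
        sum_congr rfl fun a _ => by ring
    _ = (1 + (l * B) ^ 2) + l * ∑ a, q a * D a := by
        rw [sum_add_distrib, ← sum_mul, ← mul_sum, hq1, one_mul]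
    _ ≤ (l * μ + (l * B) ^ 2) + 1 := by
        have := mul_le_mul_of_nonneg_left hμ hl
        linarith
    _ ≤ _ := Real.add_one_le_exp _

/-- Exponential moment bound for an adapted process with increments bounded by `2` and conditional
means at most `ε / 10`; the exponent `l = ε / 80` minimizes the
per-step bound `l (ε / 10) + (2 l) ^ 2 - l (ε / 5)` for the threshold `T ε / 5`. -/
lemma exp_moment {X : Type*} [Fintype X] [Nonempty X] {T : ℕ} (ε : ℝ) (h0 : 0 < ε) (h1 : ε < 1)
    (q D : Fin T → (Fin T → X) → X → ℝ)
    (hqd : ∀ t ω ω', (∀ s : Fin T, s < t → ω s = ω' s) → q t ω = q t ω')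
    (hDd : ∀ t ω ω', (∀ s : Fin T, s < t → ω s = ω' s) → D t ω = D t ω')
    (hq : ∀ t ω a, 0 ≤ q t ω a) (hq1 : ∀ t ω, ∑ a, q t ω a = 1)
    (hD : ∀ t ω a, |D t ω a| ≤ 2) (hm : ∀ t ω, ∑ a, q t ω a * D t ω a ≤ ε / 10) :
    ∑ ω : Fin T → X, (∏ t, q t ω (ω t)) *
      Real.exp (ε / 80 * (∑ t, D t ω (ω t) - T * (ε / 5))) ≤
        Real.exp (-(T * ε ^ 2 / 1600)) := by
  have hb := (path_sum_bounds 0 (Real.exp (ε / 80 * (ε / 10) + (ε / 80 * 2) ^ 2)) le_rfl T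
    (fun t ω a => q t ω a * Real.exp (ε / 80 * D t ω a))
    (fun t ω ω' h => by simp only [hqd t ω ω' h, hDd t ω ω' h])
    (fun t ω a => mul_nonneg (hq _ _ _) (Real.exp_pos _).le)
    (fun t ω => sum_nonneg fun a _ => mul_nonneg (hq _ _ _) (Real.exp_pos _).le)
    (fun t ω => sum_exp_le _ _ (hq t ω) (hq1 t ω) 2 (hD t ω) _ (by positivity) (by linarith) _
      (hm t ω))).2
  calc _ = (∑ ω : Fin T → X, ∏ t, (q t ω (ω t) * Real.exp (ε / 80 * D t ω (ω t)))) *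
        Real.exp (-(ε / 80 * (T * (ε / 5)))) := by
        rw [sum_mul]
        refine sum_congr rfl fun ω _ => ?_
        rw [prod_mul_distrib, ← Real.exp_sum, mul_assoc, ← Real.exp_add, ← mul_sum]
        congr 2; ring
    _ ≤ _ := mul_le_mul_of_nonneg_right hb (Real.exp_pos _).le
    _ = _ := by
        rw [← Real.exp_nat_mul, ← Real.exp_add]
        congr 1; ring

/-! ### Regret of multiplicative weights -/

lemma gibbs_simplex {k : ℕ} (hk : 0 < k) (w : Fin k → ℝ) : IsSimplex (gibbs w) := by
  have : Nonempty (Fin k) := ⟨⟨0, hk⟩⟩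
  have hpos : 0 < ∑ j, Real.exp (w j) := sum_pos (fun j _ => Real.exp_pos _) univ_nonempty
  refine ⟨fun i => div_nonneg (Real.exp_pos _).le hpos.le, ?_⟩
  simp only [gibbs]
  rw [← sum_div, div_self hpos.ne']

/-- Regret bound for multiplicative weights with gains in `[-1, 1]`. -/
lemma mwu_regret {k : ℕ} (hk : 0 < k) (g : ℕ → Fin k → ℝ) (hg : ∀ s i, |g s i| ≤ 1)
    (η : ℝ) (h0 : 0 < η) (h1 : η ≤ 1) (t : ℕ) (i : Fin k) :
    η * ∑ s ∈ range t, g s i ≤ Real.log k + η * ∑ s ∈ range t,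
      (∑ i, gibbs (fun i => η * ∑ r ∈ range s, g r i) i * g s i) + η ^ 2 * t := by
  have : Nonempty (Fin k) := ⟨⟨0, hk⟩⟩
  -- the partition function grows by at most `exp (η ⟨p_s, g_s⟩ + η ^ 2)` per step
  have key : ∑ i, Real.exp (η * ∑ s ∈ range t, g s i) ≤ k * Real.exp (η * ∑ s ∈ range t,
      (∑ i, gibbs (fun i => η * ∑ r ∈ range s, g r i) i * g s i) + η ^ 2 * t) := by
    induction t with
    | zero => simp
    | succ t ih =>
      set w : Fin k → ℝ := fun i => η * ∑ r ∈ range t, g r i with hw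
      have hpos : 0 < ∑ j, Real.exp (w j) := sum_pos (fun j _ => Real.exp_pos _) univ_nonempty
      have hs := gibbs_simplex hk w
      have step := sum_exp_le (gibbs w) (g t) hs.1 hs.2 1 (hg t) η h0.le (by linarith) _ le_rfl
      calc ∑ i, Real.exp (η * ∑ s ∈ range (t + 1), g s i)
          = (∑ j, Real.exp (w j)) * ∑ i, gibbs w i * Real.exp (η * g t i) := by
            rw [mul_sum]
            refine sum_congr rfl fun i _ => ?_
            rw [sum_range_succ, mul_add, Real.exp_add]
            simp only [gibbs]
            rw [← mul_assoc, mul_div_cancel₀ _ hpos.ne']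
        _ ≤ _ := mul_le_mul ih step
            (sum_nonneg fun i _ => mul_nonneg (hs.1 i) (Real.exp_pos _).le) (by positivity)
        _ = _ := by
            rw [mul_assoc, ← Real.exp_add, sum_range_succ]
            push_cast
            congr 2; ring
  have h2 : Real.exp (η * ∑ s ∈ range t, g s i) ≤ _ :=
    (single_le_sum (f := fun i => Real.exp (η * ∑ s ∈ range t, g s i))
      (fun j _ => (Real.exp_pos _).le) (mem_univ i)).trans key
  have hk' : (0 : ℝ) < k := by exact_mod_cast hk
  have h3 := Real.log_le_log (Real.exp_pos _) h2
  rw [Real.log_exp, Real.log_mul hk'.ne' (Real.exp_pos _).ne', Real.log_exp] at h3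
  linarith

lemma sum_count {l T : ℕ} (b : Fin l → ℝ) (a : Fin T → Fin l) (η : ℝ) (t : ℕ) :
    ∑ j, b j * (η * ((univ.filter fun s : Fin T => (s : ℕ) < t ∧ a s = j).card : ℝ)) =
      η * ∑ s ∈ range t, (if h : s < T then b (a ⟨s, h⟩) else 0) := by
  have h1 : ∀ j, b j * (η * ((univ.filter fun s : Fin T => (s : ℕ) < t ∧ a s = j).card : ℝ)) =
      η * ∑ s : Fin T, (if (s : ℕ) < t then (if a s = j then b j else 0) else 0) := by
    intro j
    rw [card_filter]
    push_cast
    rw [mul_left_comm, mul_sum]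
    congr 1
    refine sum_congr rfl fun s _ => ?_
    by_cases h : (s : ℕ) < t <;> by_cases h' : a s = j <;> simp [h, h']
  rw [sum_congr rfl fun j _ => h1 j, ← mul_sum, sum_comm]
  congr 1
  have h2 : ∀ s : Fin T, ∑ j, (if (s : ℕ) < t then (if a s = j then b j else 0) else 0) =
      (fun s : ℕ => if s < t then (if h : s < T then b (a ⟨s, h⟩) else 0) else 0) s := by
    intro s
    by_cases h : (s : ℕ) < t <;> simp [h]
  rw [sum_congr rfl fun s _ => h2 s,
    ← sum_range (fun s : ℕ => if s < t then (if h : s < T then b (a ⟨s, h⟩) else 0) else 0),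
    ← sum_filter]
  -- both sums agree with the sum over indices below both `t` and `T`
  have h3 : ((range T).filter fun s => s < t) ⊆ range t := by
    intro s; simp
  refine sum_subset h3 fun s hs hs' => ?_
  have : ¬ s < T := by
    intro h; exact hs' (by simp at hs ⊢; exact ⟨h, hs⟩)
  simp [this]

/-- The regret bound for gains `B i (a s)` obtained from a sequence `a` of opponent actions. -/
lemma regret_matrix {k l T : ℕ} (hk : 0 < k) (B : Fin k → Fin l → ℝ) (hB : ∀ i j, |B i j| ≤ 1)
    (a : Fin T → Fin l) (η : ℝ) (h0 : 0 < η) (h1 : η ≤ 1) (i : Fin k) :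
    η * ∑ s : Fin T, B i (a s) ≤ Real.log k + η * ∑ s : Fin T, (∑ i, gibbs (fun i =>
      ∑ j, B i j * (η * ((univ.filter fun r : Fin T => (r : ℕ) < (s : ℕ) ∧ a r = j).card : ℝ))) i *
        B i (a s)) + η ^ 2 * T := by
  have := mwu_regret hk (fun s i => if h : s < T then B i (a ⟨s, h⟩) else 0)
    (by intro s i; by_cases h : s < T <;> simp [h, hB]) η h0 h1 T i
  rw [sum_range, sum_range] at this
  simp only [sum_count]
  simpa using this

lemma regret_u {m n T : ℕ} (hm : 0 < m) (A : Matrix (Fin m) (Fin n) ℝ) (hA : ∀ i j, |A i j| ≤ 1)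
    (η : ℝ) (h0 : 0 < η) (h1 : η ≤ 1) (ω : Fin T → Fin m × Fin n) (i : Fin m) :
    η * ∑ s, A i (ω s).2 ≤ Real.log m +
      η * ∑ s : Fin T, (∑ i, uIter A η ω s i * A i (ω s).2) + η ^ 2 * T :=
  regret_matrix hm (fun i j => A i j) hA (fun s => (ω s).2) η h0 h1 i

lemma regret_v {m n T : ℕ} (hn : 0 < n) (A : Matrix (Fin m) (Fin n) ℝ) (hA : ∀ i j, |A i j| ≤ 1)
    (η : ℝ) (h0 : 0 < η) (h1 : η ≤ 1) (ω : Fin T → Fin m × Fin n) (j : Fin n) :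
    -(η * ∑ s, A (ω s).1 j) ≤ Real.log n -
      η * ∑ s : Fin T, (∑ j, A (ω s).1 j * vIter A η ω s j) + η ^ 2 * T := by
  have := regret_matrix hn (fun j i => -A i j) (by simpa using fun j i => hA i j)
    (fun s => (ω s).1) η h0 h1 j
  simp only [neg_mul, mul_neg, sum_neg_distrib] at this
  have e : ∀ s : Fin T, ∑ j, A (ω s).1 j * vIter A η ω s j = ∑ j, vIter A η ω s j * A (ω s).1 j :=
    fun s => sum_congr rfl fun j _ => mul_comm _ _
  simp only [e]
  simp only [vIter, xIter]
  linarith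

lemma uIter_congr {m n T : ℕ} (A : Matrix (Fin m) (Fin n) ℝ) (η : ℝ) (ω ω' : Fin T → Fin m × Fin n)
    (t : ℕ) (h : ∀ s : Fin T, (s : ℕ) < t → ω s = ω' s) : uIter A η ω t = uIter A η ω' t := by
  have : yIter η ω t = yIter η ω' t := by
    funext j
    simp only [yIter]
    congr 3
    ext s
    simp only [mem_filter, mem_univ, true_and]
    exact and_congr_right fun hs => by rw [h s hs]
  simp only [uIter, this]

lemma vIter_congr {m n T : ℕ} (A : Matrix (Fin m) (Fin n) ℝ) (η : ℝ) (ω ω' : Fin T → Fin m × Fin n)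
    (t : ℕ) (h : ∀ s : Fin T, (s : ℕ) < t → ω s = ω' s) : vIter A η ω t = vIter A η ω' t := by
  have : xIter η ω t = xIter η ω' t := by
    funext j
    simp only [xIter]
    congr 3
    ext s
    simp only [mem_filter, mem_univ, true_and]
    exact and_congr_right fun hs => by rw [h s hs]
  simp only [vIter, this]

/-! ### From increments to the duality gap -/

lemma maxPayoff_le {m n : ℕ} (hm : 0 < m) (A : Matrix (Fin m) (Fin n) ℝ) (v : Fin n → ℝ) (b : ℝ)
    (h : ∀ i, ∑ j, A i j * v j ≤ b) : maxPayoff A v ≤ b := by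
  refine csSup_le ⟨_, gibbs 0, gibbs_simplex hm 0, rfl⟩ ?_
  rintro r ⟨u, hu, rfl⟩
  calc _ = ∑ i, u i * ∑ j, A i j * v j := by simp only [mul_sum, mul_assoc]
    _ ≤ ∑ i, u i * b := sum_le_sum fun i _ => mul_le_mul_of_nonneg_left (h i) (hu.1 i)
    _ = b := by rw [← sum_mul, hu.2, one_mul]

lemma le_minPayoff {m n : ℕ} (hn : 0 < n) (A : Matrix (Fin m) (Fin n) ℝ) (u : Fin m → ℝ) (b : ℝ)
    (h : ∀ j, b ≤ ∑ i, A i j * u i) : b ≤ minPayoff A u := by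
  refine le_csInf ⟨_, gibbs 0, gibbs_simplex hn 0, rfl⟩ ?_
  rintro r ⟨v, hv, rfl⟩
  rw [sum_comm]
  calc b = ∑ j, v j * b := by rw [← sum_mul, hv.2, one_mul]
    _ ≤ ∑ j, v j * ∑ i, A i j * u i :=
      sum_le_sum fun j _ => mul_le_mul_of_nonneg_left (h j) (hv.1 j)
    _ = _ := by
      simp only [mul_sum]
      exact sum_congr rfl fun j _ => sum_congr rfl fun i _ => by ring

lemma sum_empirical {l T : ℕ} (b : Fin l → ℝ) (a : Fin T → Fin l) :
    ∑ j, b j * ((1 / (T : ℝ)) * ∑ t, (if a t = j then (1 : ℝ) else 0)) =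
      (1 / (T : ℝ)) * ∑ t, b (a t) := by
  simp only [mul_sum]
  rw [sum_comm]
  refine sum_congr rfl fun t _ => ?_
  rw [sum_eq_single (a t)] <;> simp +contextual [mul_comm, eq_comm]

/-- The deterministic part: if none of the `m + n + 1` increment sums exceeds `T ε / 5`, the
subsampled pair is an `ε`-approximate equilibrium. -/
lemma gap_of_increments {m n T : ℕ} (hm : 0 < m) (hn : 0 < n) (hT : 0 < T)
    (A : Matrix (Fin m) (Fin n) ℝ) (hA : ∀ i j, |A i j| ≤ 1) (ε η : ℝ) (h0 : 0 < ε) (h1 : ε < 1)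
    (hη : η = ε / 60) (hlog : 4800 * (Real.log m + Real.log n) ≤ T * ε ^ 2)
    (ω : Fin T → (Fin m × Fin n) × (Fin m × Fin n))
    (e1 : ∀ i, ∑ t, (A i (ω t).2.2 - A i (ω t).1.2) ≤ T * (ε / 5))
    (e2 : ∀ j, ∑ t, (A (ω t).1.1 j - A (ω t).2.1 j) ≤ T * (ε / 5))
    (e3 : ∑ t : Fin T, (∑ i, uIter A η (fun s => (ω s).1) t i * A i (ω t).1.2 -
      ∑ j, A (ω t).1.1 j * vIter A η (fun s => (ω s).1) t j) ≤ T * (ε / 5)) :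
    maxPayoff A (fun j => (1 / (T : ℝ)) * ∑ t, (if (ω t).2.2 = j then (1:ℝ) else 0)) -
      minPayoff A (fun i => (1 / (T : ℝ)) * ∑ t, (if (ω t).2.1 = i then (1:ℝ) else 0)) ≤ ε := by
  have hT' : (0 : ℝ) < T := by exact_mod_cast hT
  have hη0 : 0 < η := by rw [hη]; positivity
  have hη1 : η ≤ 1 := by rw [hη]; linarith
  simp only [sum_sub_distrib] at e1 e2 e3
  set U := ∑ t : Fin T, ∑ i, uIter A η (fun s => (ω s).1) t i * A i (ω t).1.2 with hU
  set V := ∑ t : Fin T, ∑ j, A (ω t).1.1 j * vIter A η (fun s => (ω s).1) t j with hV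
  have r1 : ∀ i, ∑ t, A i (ω t).2.2 ≤ T * (ε / 5) + Real.log m / η + U + η * T := by
    intro i
    have := regret_u hm A hA η hη0 hη1 (fun s => (ω s).1) i
    have h2 : ∑ t, A i (ω t).1.2 ≤ Real.log m / η + U + η * T := by
      have h3 : Real.log m / η + U + η * T = (Real.log m + η * U + η ^ 2 * T) / η := by
        field_simp
      rw [h3, le_div_iff₀ hη0, mul_comm]
      exact this
    linarith [e1 i]
  have r2 : ∀ j, -(T * (ε / 5)) - Real.log n / η + V - η * T ≤ ∑ t, A (ω t).2.1 j := by
    intro j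
    have := regret_v hn A hA η hη0 hη1 (fun s => (ω s).1) j
    have h2 : -∑ t, A (ω t).1.1 j ≤ Real.log n / η - V + η * T := by
      have h3 : Real.log n / η - V + η * T = (Real.log n - η * V + η ^ 2 * T) / η := by
        field_simp
      rw [h3, le_div_iff₀ hη0]
      linarith
    linarith [e2 j]
  have hmax := maxPayoff_le hm A
    (fun j => (1 / (T : ℝ)) * ∑ t, (if (ω t).2.2 = j then (1:ℝ) else 0))
    (1 / (T : ℝ) * (T * (ε / 5) + Real.log m / η + U + η * T)) (by
      intro i
      rw [sum_empirical (fun j => A i j) (fun t => (ω t).2.2)]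
      exact mul_le_mul_of_nonneg_left (r1 i) (by positivity))
  have hmin := le_minPayoff hn A
    (fun i => (1 / (T : ℝ)) * ∑ t, (if (ω t).2.1 = i then (1:ℝ) else 0))
    (1 / (T : ℝ) * (-(T * (ε / 5)) - Real.log n / η + V - η * T)) (by
      intro j
      rw [sum_empirical (fun i => A i j) (fun t => (ω t).2.1)]
      exact mul_le_mul_of_nonneg_left (r2 j) (by positivity))
  refine (sub_le_sub hmax hmin).trans ?_
  rw [← mul_sub, one_div, inv_mul_le_iff₀ hT']
  have hl : Real.log m / η + Real.log n / η ≤ T * ε / 80 := by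
    rw [← add_div, div_le_iff₀ hη0, hη]
    nlinarith
  have : η * T = T * ε / 60 := by rw [hη]; ring
  have : 0 < T * ε := by positivity
  linarith

/-! ### Conditional means and the union bound -/

lemma sum_prod4 {m n : ℕ} (p1 p3 : Fin m → ℝ) (p2 p4 : Fin n → ℝ) :
    ∑ a : (Fin m × Fin n) × (Fin m × Fin n), p1 a.1.1 * p2 a.1.2 * (p3 a.2.1 * p4 a.2.2) =
      (∑ i, p1 i) * (∑ j, p2 j) * ((∑ i, p3 i) * ∑ j, p4 j) := by
  rw [Fintype.sum_mul_sum, Fintype.sum_mul_sum, ← Fintype.sum_prod_type',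
    ← Fintype.sum_prod_type', Fintype.sum_mul_sum, ← Fintype.sum_prod_type']

lemma sum_mul_le_l1 {k : ℕ} (p q b : Fin k → ℝ) (hb : ∀ i, |b i| ≤ 1) (d : ℝ)
    (h : ∑ i, |p i - q i| ≤ d) : |∑ i, p i * b i - ∑ i, q i * b i| ≤ d := by
  rw [← sum_sub_distrib]
  refine (abs_sum_le_sum_abs _ _).trans (le_trans (sum_le_sum fun i _ => ?_) h)
  rw [← sub_mul, abs_mul]
  exact mul_le_of_le_one_right (abs_nonneg _) (hb i)

lemma abs_avg_le {k : ℕ} (p b : Fin k → ℝ) (hp : IsSimplex p) (hb : ∀ i, |b i| ≤ 1) :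
    |∑ i, p i * b i| ≤ 1 := by
  rw [← hp.2]
  refine (abs_sum_le_sum_abs _ _).trans (sum_le_sum fun i _ => ?_)
  rw [abs_mul, abs_of_nonneg (hp.1 i)]
  exact mul_le_of_le_one_right (hp.1 i) (hb i)

/-- Conditional mean of `u_tᵀ A e_j - e_iᵀ A v_t` under `(i, j) ∼ p1 ⊗ p2`, where `p1`, `p2` are
`δ`-close to `u_t`, `v_t`. -/
lemma mean_cross {m n : ℕ} (A : Matrix (Fin m) (Fin n) ℝ) (hA : ∀ i j, |A i j| ≤ 1)
    (p1 u : Fin m → ℝ) (p2 v : Fin n → ℝ) (h1 : IsSimplex p1) (h2 : IsSimplex p2)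
    (d : ℝ) (hu : ∑ i, |p1 i - u i| ≤ d) (hv : ∑ j, |p2 j - v j| ≤ d) :
    ∑ j, p2 j * ∑ i, u i * A i j - ∑ i, p1 i * ∑ j, A i j * v j ≤ 2 * d := by
  have e1 : ∑ j, p2 j * ∑ i, u i * A i j = ∑ i, u i * ∑ j, p2 j * A i j := by
    simp only [mul_sum]
    rw [sum_comm]
    exact sum_congr rfl fun i _ => sum_congr rfl fun j _ => by ring
  have e2 : ∑ i, p1 i * ∑ j, A i j * v j = ∑ j, v j * ∑ i, p1 i * A i j := by
    simp only [mul_sum]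
    rw [sum_comm]
    exact sum_congr rfl fun i _ => sum_congr rfl fun j _ => by ring
  have e3 : ∑ i, p1 i * ∑ j, p2 j * A i j = ∑ j, p2 j * ∑ i, p1 i * A i j := by
    simp only [mul_sum]
    rw [sum_comm]
    exact sum_congr rfl fun i _ => sum_congr rfl fun j _ => by ring
  have b1 := abs_le.1 (sum_mul_le_l1 p1 u (fun i => ∑ j, p2 j * A i j)
    (fun i => abs_avg_le p2 _ h2 (hA i)) d hu)
  have b2 := abs_le.1 (sum_mul_le_l1 p2 v (fun j => ∑ i, p1 i * A i j)
    (fun j => abs_avg_le p1 _ h1 (fun i => hA i j)) d hv)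
  rw [e1, e2]
  linarith [b1.1, b2.2]

/-- There is an absolute constant `c > 0` such that running the matrix
game stochastic process with `δ ≤ ε/20`, `η = ε/60`, `T ≥ c ε⁻² log(mn/α)`, and additionally
sampling at each step `i'_t ∼ ũ'_t`, `j'_t ∼ ṽ'_t` (conditionally on the history,
independent of `(i_t, j_t)`), the subsampled pair `(û, v̂)` is an `ε`-approximate Nash
equilibrium with probability at least `1 - α`. A sample path is `ω` with
`(i_t, j_t) = (ω t).1` and `(i'_t, j'_t) = (ω t).2`, and the path probability is
`∏_t ũ_t(i_t) ṽ_t(j_t) ũ'_t(i'_t) ṽ'_t(j'_t)`. -/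
theorem stmt7 : ∃ c : ℝ, 0 < c ∧
    ∀ (m n T : ℕ), 0 < m → 0 < n →
    ∀ A : Matrix (Fin m) (Fin n) ℝ, (∀ i j, |A i j| ≤ 1) →
    ∀ ε α δ η : ℝ, ε ∈ Set.Ioo (0:ℝ) 1 → α ∈ Set.Ioo (0:ℝ) 1 →
      δ ≤ ε / 20 → η = ε / 60 →
      c * Real.log ((m : ℝ) * n / α) / ε ^ 2 ≤ (T : ℝ) →
    ∀ (utilde utilde' : ℕ → (Fin T → (Fin m × Fin n) × (Fin m × Fin n)) → Fin m → ℝ)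
      (vtilde vtilde' : ℕ → (Fin T → (Fin m × Fin n) × (Fin m × Fin n)) → Fin n → ℝ),
    (∀ (t : ℕ) ω ω', (∀ s : Fin T, (s : ℕ) < t → ω s = ω' s) → utilde t ω = utilde t ω') →
    (∀ (t : ℕ) ω ω', (∀ s : Fin T, (s : ℕ) < t → ω s = ω' s) → vtilde t ω = vtilde t ω') →
    (∀ (t : ℕ) ω ω', (∀ s : Fin T, (s : ℕ) < t → ω s = ω' s) → utilde' t ω = utilde' t ω') →
    (∀ (t : ℕ) ω ω', (∀ s : Fin T, (s : ℕ) < t → ω s = ω' s) → vtilde' t ω = vtilde' t ω') →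
    (∀ t ω, IsSimplex (utilde t ω)) → (∀ t ω, IsSimplex (vtilde t ω)) →
    (∀ t ω, IsSimplex (utilde' t ω)) → (∀ t ω, IsSimplex (vtilde' t ω)) →
    (∀ t ω, ∑ i, |utilde t ω i - uIter A η (fun s => (ω s).1) t i| ≤ δ) →
    (∀ t ω, ∑ j, |vtilde t ω j - vIter A η (fun s => (ω s).1) t j| ≤ δ) →
    (∀ t ω, ∑ i, |utilde' t ω i - uIter A η (fun s => (ω s).1) t i| ≤ δ) →
    (∀ t ω, ∑ j, |vtilde' t ω j - vIter A η (fun s => (ω s).1) t j| ≤ δ) →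
    1 - α ≤ ∑ ω : Fin T → (Fin m × Fin n) × (Fin m × Fin n),
      Set.indicator
        {ω : Fin T → (Fin m × Fin n) × (Fin m × Fin n) |
          maxPayoff A
              (fun j => (1 / (T : ℝ)) * ∑ t, (if (ω t).2.2 = j then (1:ℝ) else 0)) -
            minPayoff A
              (fun i => (1 / (T : ℝ)) * ∑ t, (if (ω t).2.1 = i then (1:ℝ) else 0))
          ≤ ε}
        (fun ω => ∏ t : Fin T,
          utilde t.val ω (ω t).1.1 * vtilde t.val ω (ω t).1.2 *
            (utilde' t.val ω (ω t).2.1 * vtilde' t.val ω (ω t).2.2)) ω := by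
  refine ⟨4800, by norm_num, ?_⟩
  intro m n T hm hn A hA ε α δ η hε hα hδ hη hT u u' v v' du dv du' dv' su sv su' sv' cu cv cu' cv'
  obtain ⟨h0, h1⟩ := hε
  obtain ⟨a0, a1⟩ := hα
  have : Nonempty (Fin m) := ⟨⟨0, hm⟩⟩
  have : Nonempty (Fin n) := ⟨⟨0, hn⟩⟩
  have hm1 : (1 : ℝ) ≤ m := by exact_mod_cast hm
  have hn1 : (1 : ℝ) ≤ n := by exact_mod_cast hn
  have hmn1 : (1 : ℝ) ≤ (m : ℝ) * n := by nlinarith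
  have hT2 : 4800 * Real.log ((m : ℝ) * n / α) ≤ T * ε ^ 2 := by
    rwa [div_le_iff₀ (by positivity)] at hT
  have hlpos : 0 < Real.log ((m : ℝ) * n / α) :=
    Real.log_pos (by rw [lt_div_iff₀ a0]; linarith)
  have hTpos : 0 < T := by
    rcases Nat.eq_zero_or_pos T with h | h
    · subst h; simp at hT2; linarith
    · exact h
  have hlog : 4800 * (Real.log m + Real.log n) ≤ T * ε ^ 2 := by
    refine le_trans ?_ hT2
    rw [← Real.log_mul (by positivity) (by positivity)]
    have : Real.log ((m : ℝ) * n) ≤ Real.log ((m : ℝ) * n / α) :=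
      Real.log_le_log (by positivity) (by rw [le_div_iff₀ a0]; nlinarith)
    linarith
  set q : Fin T → (Fin T → (Fin m × Fin n) × (Fin m × Fin n)) →
      (Fin m × Fin n) × (Fin m × Fin n) → ℝ := fun t ω a =>
    u t.val ω a.1.1 * v t.val ω a.1.2 * (u' t.val ω a.2.1 * v' t.val ω a.2.2) with hq
  have qd : ∀ t ω ω', (∀ s : Fin T, s < t → ω s = ω' s) → q t ω = q t ω' := by
    intro t ω ω' h
    have h' : ∀ s : Fin T, (s : ℕ) < (t : ℕ) → ω s = ω' s := fun s hs => h s hs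
    simp only [hq, du t ω ω' h', dv t ω ω' h', du' t ω ω' h', dv' t ω ω' h']
  have q0 : ∀ t ω a, 0 ≤ q t ω a := fun t ω a =>
    mul_nonneg (mul_nonneg ((su _ _).1 _) ((sv _ _).1 _))
      (mul_nonneg ((su' _ _).1 _) ((sv' _ _).1 _))
  have q1 : ∀ t ω, ∑ a, q t ω a = 1 := by
    intro t ω
    simp only [hq]
    rw [sum_prod4, (su _ _).2, (sv _ _).2, (su' _ _).2, (sv' _ _).2]
    norm_num
  have hW1 : 1 ≤ ∑ ω, ∏ t, q t ω (ω t) := by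
    simpa using (path_sum_bounds 1 1 zero_le_one T q qd q0 (fun t ω => (q1 t ω).ge)
      (fun t ω => (q1 t ω).le)).1
  -- marginals of the transition weights
  have m1 : ∀ t ω (f : Fin m → ℝ), ∑ a, q t ω a * f a.1.1 = ∑ i, u t.val ω i * f i := by
    intro t ω f
    have := sum_prod4 (fun i => u t.val ω i * f i) (u' t.val ω) (v t.val ω) (v' t.val ω)
    rw [(sv _ _).2, (su' _ _).2, (sv' _ _).2, mul_one, mul_one, mul_one] at this
    rw [← this]
    exact sum_congr rfl fun a _ => by simp only [hq]; ring
  have m2 : ∀ t ω (f : Fin n → ℝ), ∑ a, q t ω a * f a.1.2 = ∑ j, v t.val ω j * f j := by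
    intro t ω f
    have := sum_prod4 (u t.val ω) (u' t.val ω) (fun j => v t.val ω j * f j) (v' t.val ω)
    rw [(su _ _).2, (su' _ _).2, (sv' _ _).2, mul_one, mul_one, one_mul] at this
    rw [← this]
    exact sum_congr rfl fun a _ => by simp only [hq]; ring
  have m3 : ∀ t ω (f : Fin m → ℝ), ∑ a, q t ω a * f a.2.1 = ∑ i, u' t.val ω i * f i := by
    intro t ω f
    have := sum_prod4 (u t.val ω) (fun i => u' t.val ω i * f i) (v t.val ω) (v' t.val ω)
    rw [(su _ _).2, (sv _ _).2, (sv' _ _).2, mul_one, mul_one, one_mul] at this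
    rw [← this]
    exact sum_congr rfl fun a _ => by simp only [hq]; ring
  have m4 : ∀ t ω (f : Fin n → ℝ), ∑ a, q t ω a * f a.2.2 = ∑ j, v' t.val ω j * f j := by
    intro t ω f
    have := sum_prod4 (u t.val ω) (u' t.val ω) (v t.val ω) (fun j => v' t.val ω j * f j)
    rw [(su _ _).2, (sv _ _).2, (su' _ _).2, mul_one, one_mul, one_mul] at this
    rw [← this]
    exact sum_congr rfl fun a _ => by simp only [hq]; ring
  have hU : ∀ (ω : Fin T → Fin m × Fin n) (t : ℕ), IsSimplex (uIter A η ω t) :=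
    fun ω t => gibbs_simplex hm _
  have hV : ∀ (ω : Fin T → Fin m × Fin n) (t : ℕ), IsSimplex (vIter A η ω t) :=
    fun ω t => gibbs_simplex hn _
  have two : ∀ x y : ℝ, |x| ≤ 1 → |y| ≤ 1 → |x - y| ≤ 2 := by
    intro x y hx hy
    have := abs_sub x y
    linarith
  let D1 : Fin m → Fin T → (Fin T → (Fin m × Fin n) × (Fin m × Fin n)) →
      (Fin m × Fin n) × (Fin m × Fin n) → ℝ := fun i _ _ a => A i a.2.2 - A i a.1.2
  let D2 : Fin n → Fin T → (Fin T → (Fin m × Fin n) × (Fin m × Fin n)) →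
      (Fin m × Fin n) × (Fin m × Fin n) → ℝ := fun j _ _ a => A a.1.1 j - A a.2.1 j
  let D3 : Fin T → (Fin T → (Fin m × Fin n) × (Fin m × Fin n)) →
      (Fin m × Fin n) × (Fin m × Fin n) → ℝ := fun t ω a =>
    ∑ i, uIter A η (fun s => (ω s).1) t i * A i a.1.2 -
      ∑ j, A a.1.1 j * vIter A η (fun s => (ω s).1) t j
  have E1 := fun i => exp_moment ε h0 h1 q (D1 i) qd (fun _ _ _ _ => rfl) q0 q1
    (fun _ _ a => two _ _ (hA _ _) (hA _ _)) (by
      intro t ω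
      simp only [D1, mul_sub, sum_sub_distrib]
      rw [m4 t ω (fun j => A i j), m2 t ω (fun j => A i j)]
      have b1 := abs_le.1 (sum_mul_le_l1 _ _ (fun j => A i j) (hA i) _ (cv t ω))
      have b2 := abs_le.1 (sum_mul_le_l1 _ _ (fun j => A i j) (hA i) _ (cv' t ω))
      linarith [b1.1, b2.2])
  have E2 := fun j => exp_moment ε h0 h1 q (D2 j) qd (fun _ _ _ _ => rfl) q0 q1
    (fun _ _ a => two _ _ (hA _ _) (hA _ _)) (by
      intro t ω
      simp only [D2, mul_sub, sum_sub_distrib]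
      rw [m1 t ω (fun i => A i j), m3 t ω (fun i => A i j)]
      have b1 := abs_le.1 (sum_mul_le_l1 _ _ (fun i => A i j) (fun i => hA i j) _ (cu t ω))
      have b2 := abs_le.1 (sum_mul_le_l1 _ _ (fun i => A i j) (fun i => hA i j) _ (cu' t ω))
      linarith [b1.2, b2.1])
  have E3 := exp_moment ε h0 h1 q D3 qd (fun t ω ω' h => by
      have h' : ∀ s : Fin T, (s : ℕ) < (t : ℕ) → (ω s).1 = (ω' s).1 := fun s hs => by
        rw [h s hs]
      simp only [D3]
      rw [uIter_congr A η (fun s => (ω s).1) (fun s => (ω' s).1) t h',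
        vIter_congr A η (fun s => (ω s).1) (fun s => (ω' s).1) t h']) q0 q1
    (fun t ω a => two _ _ (abs_avg_le _ _ (hU _ _) fun i => hA i _) (by
      have := abs_avg_le _ (fun j => A a.1.1 j) (hV (fun s => (ω s).1) t) (hA _)
      simpa only [mul_comm] using this)) (by
      intro t ω
      simp only [D3, mul_sub, sum_sub_distrib]
      rw [m2 t ω (fun j => ∑ i, uIter A η (fun s => (ω s).1) t i * A i j),
        m1 t ω (fun i => ∑ j, A i j * vIter A η (fun s => (ω s).1) t j)]
      have := mean_cross A hA _ _ _ _ (su t ω) (sv t ω) δ (cu t ω) (cv t ω)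
      linarith)
  have gap := fun ω => gap_of_increments hm hn hTpos A hA ε η h0 h1 hη hlog ω
  set G : Set (Fin T → (Fin m × Fin n) × (Fin m × Fin n)) := {ω |
          maxPayoff A
              (fun j => (1 / (T : ℝ)) * ∑ t, (if (ω t).2.2 = j then (1:ℝ) else 0)) -
            minPayoff A
              (fun i => (1 / (T : ℝ)) * ∑ t, (if (ω t).2.1 = i then (1:ℝ) else 0))
          ≤ ε} with hG
  change 1 - α ≤ ∑ ω, G.indicator (fun ω => ∏ t, q t ω (ω t)) ω
  have W0 : ∀ ω, 0 ≤ ∏ t, q t ω (ω t) := fun ω => prod_nonneg fun t _ => q0 _ _ _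
  rcases hmn1.eq_or_lt with hmn | hmn
  · have hm' : m = 1 := by
      have : m * n = 1 := by exact_mod_cast hmn.symm
      exact Nat.eq_one_of_mul_eq_one_right this
    have hn' : n = 1 := by
      have : m * n = 1 := by exact_mod_cast hmn.symm
      exact Nat.eq_one_of_mul_eq_one_left this
    subst hm'
    subst hn'
    have hTε : 0 ≤ (T : ℝ) * (ε / 5) := by positivity
    have hall : ∀ ω, ω ∈ G := by
      intro ω
      refine gap ω ?_ ?_ ?_
      · intro i
        have : ∀ t, (ω t).2.2 = (ω t).1.2 := fun t => Subsingleton.elim _ _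
        simpa [this] using hTε
      · intro j
        have : ∀ t, (ω t).2.1 = (ω t).1.1 := fun t => Subsingleton.elim _ _
        simpa [this] using hTε
      · have hu1 : ∀ t : ℕ, uIter A η (fun s => (ω s).1) t 0 = 1 := fun t => by
          simpa using (hU (fun s => (ω s).1) t).2
        have hv1 : ∀ t : ℕ, vIter A η (fun s => (ω s).1) t 0 = 1 := fun t => by
          simpa using (hV (fun s => (ω s).1) t).2
        have e1 : ∀ t, (ω t).1.1 = 0 := fun t => Subsingleton.elim _ _
        have e2 : ∀ t, (ω t).1.2 = 0 := fun t => Subsingleton.elim _ _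
        simpa [hu1, hv1, e1, e2] using hTε
    rw [sum_congr rfl fun ω _ => Set.indicator_of_mem (hall ω) _]
    linarith
  · -- on a bad path some increment sum `S` exceeds `T ε / 5`, so `X S` dominates its weight
    let X : ((Fin T → (Fin m × Fin n) × (Fin m × Fin n)) → ℝ) →
        (Fin T → (Fin m × Fin n) × (Fin m × Fin n)) → ℝ := fun S ω =>
      (∏ t, q t ω (ω t)) * Real.exp (ε / 80 * (S ω - T * (ε / 5)))
    have X0 : ∀ S ω, 0 ≤ X S ω := fun S ω => mul_nonneg (W0 ω) (Real.exp_pos _).le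
    have XW : ∀ S ω, T * (ε / 5) ≤ S ω → ∏ t, q t ω (ω t) ≤ X S ω := by
      intro S ω h
      refine le_mul_of_one_le_right (W0 ω) (Real.one_le_exp ?_)
      exact mul_nonneg (by positivity) (by linarith)
    have main : ∀ ω, ∏ t, q t ω (ω t) ≤ G.indicator (fun ω => ∏ t, q t ω (ω t)) ω +
        (∑ i, X (fun ω => ∑ t, D1 i t ω (ω t)) ω + ∑ j, X (fun ω => ∑ t, D2 j t ω (ω t)) ω +
          X (fun ω => ∑ t, D3 t ω (ω t)) ω) := by
      intro ω
      have p1 : 0 ≤ ∑ i, X (fun ω => ∑ t, D1 i t ω (ω t)) ω :=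
        sum_nonneg fun i _ => X0 (fun ω => ∑ t, D1 i t ω (ω t)) ω
      have p2 : 0 ≤ ∑ j, X (fun ω => ∑ t, D2 j t ω (ω t)) ω :=
        sum_nonneg fun j _ => X0 (fun ω => ∑ t, D2 j t ω (ω t)) ω
      have p3 := X0 (fun ω => ∑ t, D3 t ω (ω t)) ω
      by_cases hω : ω ∈ G
      · rw [Set.indicator_of_mem hω]
        linarith
      · rw [Set.indicator_of_notMem hω]
        by_cases c1 : ∀ i, ∑ t, D1 i t ω (ω t) ≤ T * (ε / 5)
        · by_cases c2 : ∀ j, ∑ t, D2 j t ω (ω t) ≤ T * (ε / 5)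
          · have c3 : ¬ ∑ t, D3 t ω (ω t) ≤ T * (ε / 5) := fun c3 => hω (gap ω c1 c2 c3)
            have := XW (fun ω => ∑ t, D3 t ω (ω t)) ω (not_le.1 c3).le
            linarith
          · push Not at c2
            obtain ⟨j, hj⟩ := c2
            have h2 := XW (fun ω => ∑ t, D2 j t ω (ω t)) ω hj.le
            have h3 := single_le_sum (f := fun j => X (fun ω => ∑ t, D2 j t ω (ω t)) ω)
              (fun j _ => X0 (fun ω => ∑ t, D2 j t ω (ω t)) ω) (mem_univ j)
            linarith
        · push Not at c1
          obtain ⟨j, hj⟩ := c1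
          have h2 := XW (fun ω => ∑ t, D1 j t ω (ω t)) ω hj.le
          have h3 := single_le_sum (f := fun j => X (fun ω => ∑ t, D1 j t ω (ω t)) ω)
            (fun j _ => X0 (fun ω => ∑ t, D1 j t ω (ω t)) ω) (mem_univ j)
          linarith
    have tot := sum_le_sum fun ω (_ : ω ∈ univ) => main ω
    rw [sum_add_distrib, sum_add_distrib, sum_add_distrib, sum_comm (s := univ) (t := univ),
      sum_comm (s := univ) (t := univ)
        (f := fun ω j => X (fun ω => ∑ t, D2 j t ω (ω t)) ω)] at tot
    set R := Real.exp (-(T * ε ^ 2 / 1600)) with hR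
    have t1 : ∑ i, ∑ ω, X (fun ω => ∑ t, D1 i t ω (ω t)) ω ≤ m * R := by
      refine (sum_le_sum fun i _ => E1 i).trans ?_
      simp
    have t2 : ∑ j, ∑ ω, X (fun ω => ∑ t, D2 j t ω (ω t)) ω ≤ n * R := by
      refine (sum_le_sum fun i _ => E2 i).trans ?_
      simp
    have t3 : ∑ ω, X (fun ω => ∑ t, D3 t ω (ω t)) ω ≤ R := E3
    have hmn2 : (2 : ℝ) ≤ (m : ℝ) * n := by
      have : 1 < m * n := by exact_mod_cast hmn
      exact_mod_cast this
    set z := (m : ℝ) * n / α with hz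
    have hz0 : 0 < z := by positivity
    have hz2 : 2 ≤ z := by rw [hz, le_div_iff₀ a0]; nlinarith
    have hRz : R ≤ (z ^ 3)⁻¹ := by
      rw [hR, Real.exp_neg]
      apply inv_anti₀ (by positivity)
      rw [← Real.exp_log (pow_pos hz0 3), Real.log_pow]
      apply Real.exp_le_exp.2
      push_cast
      linarith
    -- uses `m + n + 1 ≤ 3 m n = 3 α z` and `3 ≤ z ^ 2`
    have hfin : (m + n + 1) * R ≤ α := by
      have s1 : (m : ℝ) + n + 1 ≤ 3 * (α * z) := by
        rw [hz, mul_div_cancel₀ _ a0.ne']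
        nlinarith
      have s2 : ((m : ℝ) + n + 1) ≤ α * z ^ 3 := by
        refine s1.trans ?_
        have h3 : 3 ≤ z ^ 2 := by nlinarith
        have := mul_le_mul_of_nonneg_right h3 (mul_pos a0 hz0).le
        linarith [show α * z ^ 3 = z ^ 2 * (α * z) by ring]
      calc ((m : ℝ) + n + 1) * R ≤ (α * z ^ 3) * (z ^ 3)⁻¹ :=
            mul_le_mul s2 hRz (Real.exp_pos _).le (by positivity)
        _ = α := by field_simp
    have : (m + n + 1) * R = m * R + n * R + R := by ring
    linarith
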